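/- (Monotone decrease and convergence of objective values) If α ≥ L, then along the sequence {Z^t} generated by the proximal network-slimming iteration the objective values satisfy F(Z^{t+1}) ≤ F(Z^t) for every t, and the real sequence {F(Z^t)} converges (being nonincreasing and bounded below by 0). -/

import Mathlib

noncomputable section

/-- Concatenation `W̃ = (W, γ)` of `W ∈ ℝⁿ` and `γ ∈ ℝᶜ` into a single Euclidean vector. -/
def pairWγ {n c : ℕ} (W : EuclideanSpace ℝ (Fin n)) (γ : EuclideanSpace ℝ (Fin c)) :
    EuclideanSpace ℝ (Fin n ⊕ Fin c) :=
  (EuclideanSpace.equiv (Fin n ⊕ Fin c) ℝ).symm (Sum.elim (fun i => W i) (fun j => γ j))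

/-- Partial gradient `∇_W L̃(W, γ)`. -/
def gradW {n c : ℕ} (Lt : EuclideanSpace ℝ (Fin n ⊕ Fin c) → ℝ)
    (W : EuclideanSpace ℝ (Fin n)) (γ : EuclideanSpace ℝ (Fin c)) : EuclideanSpace ℝ (Fin n) :=
  (EuclideanSpace.equiv (Fin n) ℝ).symm (fun i => gradient Lt (pairWγ W γ) (Sum.inl i))

/-- Partial gradient `∇_γ L̃(W, γ)`. -/
def gradG {n c : ℕ} (Lt : EuclideanSpace ℝ (Fin n ⊕ Fin c) → ℝ)
    (W : EuclideanSpace ℝ (Fin n)) (γ : EuclideanSpace ℝ (Fin c)) : EuclideanSpace ℝ (Fin c) :=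
  (EuclideanSpace.equiv (Fin c) ℝ).symm (fun j => gradient Lt (pairWγ W γ) (Sum.inr j))

/-- Soft-thresholding operator `(S(x, τ))_i = sign(x_i) · max{0, |x_i| − τ}`. -/
def softThresh {c : ℕ} (x : EuclideanSpace ℝ (Fin c)) (τ : ℝ) : EuclideanSpace ℝ (Fin c) :=
  (EuclideanSpace.equiv (Fin c) ℝ).symm (fun i => Real.sign (x i) * max 0 (|x i| - τ))

/-- The objective `F(W, γ, ξ) = L̃(W, γ) + λ‖ξ‖₁ + (β/2)‖γ − ξ‖₂²`. -/
def objF {n c : ℕ} (Lt : EuclideanSpace ℝ (Fin n ⊕ Fin c) → ℝ) (lam β : ℝ)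
    (W : EuclideanSpace ℝ (Fin n)) (γ ξ : EuclideanSpace ℝ (Fin c)) : ℝ :=
  Lt (pairWγ W γ) + lam * (∑ i, |ξ i|) + β / 2 * ‖γ - ξ‖ ^ 2

theorem descent_aux {E : Type*} [NormedAddCommGroup E] [InnerProductSpace ℝ E] [CompleteSpace E]
    (f : E → ℝ) (L : ℝ) (hf : Differentiable ℝ f)
    (hLip : ∀ x y, ‖gradient f x - gradient f y‖ ≤ L * ‖x - y‖) (x d : E) :
    f (x + d) ≤ f x + inner ℝ (gradient f x) d + L / 2 * ‖d‖ ^ 2 := by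
  have hd : ∀ s : ℝ, HasDerivAt
      (fun s : ℝ => f (x + s • d) - s * inner ℝ (gradient f x) d - L / 2 * ‖d‖ ^ 2 * s ^ 2)
      (inner ℝ (gradient f (x + s • d)) d - inner ℝ (gradient f x) d
        - L / 2 * ‖d‖ ^ 2 * (2 * s)) s := by
    intro s
    have h1 : HasDerivAt (fun s : ℝ => x + s • d) d s := by
      simpa using ((hasDerivAt_id s).smul_const d).const_add x
    have h2 := (hf (x + s • d)).hasGradientAt.hasFDerivAt.comp_hasDerivAt s h1
    have h3 : HasDerivAt (fun s : ℝ => f (x + s • d)) (inner ℝ (gradient f (x + s • d)) d) s := by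
      simpa [Function.comp_def] using h2
    have h4 : HasDerivAt (fun s : ℝ => s * inner ℝ (gradient f x) d)
        (1 * inner ℝ (gradient f x) d) s := (hasDerivAt_id s).mul_const _
    have h5 : HasDerivAt (fun s : ℝ => L / 2 * ‖d‖ ^ 2 * s ^ 2)
        (L / 2 * ‖d‖ ^ 2 * (2 * s)) s := by
      have := (hasDerivAt_pow 2 s).const_mul (L / 2 * ‖d‖ ^ 2)
      simpa using this
    rw [one_mul] at h4
    exact (h3.sub h4).sub h5
  have hanti : AntitoneOn
      (fun s : ℝ => f (x + s • d) - s * inner ℝ (gradient f x) d - L / 2 * ‖d‖ ^ 2 * s ^ 2)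
      (Set.Icc 0 1) := by
    apply antitoneOn_of_deriv_nonpos (convex_Icc 0 1)
    · exact fun s _ => (hd s).continuousAt.continuousWithinAt
    · exact fun s _ => (hd s).differentiableAt.differentiableWithinAt
    · intro s hs
      rw [interior_Icc] at hs
      rw [(hd s).deriv, ← inner_sub_left]
      have h1 := real_inner_le_norm (gradient f (x + s • d) - gradient f x) d
      have h2 := hLip (x + s • d) x
      rw [add_sub_cancel_left, norm_smul, Real.norm_eq_abs, abs_of_pos hs.1] at h2
      have h3 := mul_le_mul_of_nonneg_right h2 (norm_nonneg d)
      nlinarith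
  have := hanti (Set.left_mem_Icc.2 zero_le_one) (Set.right_mem_Icc.2 zero_le_one) zero_le_one
  simp only [one_smul, zero_smul, add_zero, one_mul, zero_mul, one_pow] at this
  linarith

theorem prox_aux (lam k x v : ℝ) (hl : 0 < lam) (hk : 0 < k) :
    lam * |Real.sign x * max 0 (|x| - lam / k)|
      + k / 2 * (Real.sign x * max 0 (|x| - lam / k) - x) ^ 2
      ≤ lam * |v| + k / 2 * (v - x) ^ 2 := by
  obtain ⟨τ, rfl⟩ : ∃ τ, lam = k * τ := ⟨lam / k, by field_simp⟩
  have hτ : 0 < τ := pos_of_mul_pos_right hl hk.le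
  rw [mul_div_cancel_left₀ _ hk.ne']
  suffices h : τ * |Real.sign x * max 0 (|x| - τ)|
      + 1 / 2 * (Real.sign x * max 0 (|x| - τ) - x) ^ 2 ≤ τ * |v| + 1 / 2 * (v - x) ^ 2 by
    have := mul_le_mul_of_nonneg_left h hk.le
    linarith
  have hv1 := le_abs_self v
  have hv2 := neg_abs_le v
  have hv3 := sq_abs v
  have hv0 := abs_nonneg v
  rcases le_total (|x| - τ) 0 with h | h
  · rw [max_eq_left h]
    simp only [mul_zero, abs_zero, zero_sub]
    have h1 : v * x ≤ |v| * |x| := by rw [← abs_mul]; exact le_abs_self _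
    nlinarith [mul_nonneg hv0 (sub_nonneg.2 (sub_nonpos.1 h)), sq_nonneg v]
  · rw [max_eq_right h]
    rcases lt_trichotomy x 0 with hx | hx | hx
    · rw [Real.sign_of_neg hx, abs_of_neg hx] at *
      rw [show |(-1 : ℝ) * (-x - τ)| = -x - τ by
        rw [neg_one_mul, abs_neg, abs_of_nonneg h]]
      nlinarith [sq_nonneg (v - x - τ), mul_nonneg hτ.le (sub_nonneg.2 hv2)]
    · subst hx; simp at h; linarith
    · rw [Real.sign_of_pos hx, abs_of_pos hx] at *
      rw [one_mul, abs_of_nonneg h]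
      nlinarith [sq_nonneg (v - x + τ), mul_nonneg hτ.le (sub_nonneg.2 hv1)]

/-- (Monotone decrease and convergence of objective values.) -/
theorem monotone_decrease_and_convergence
    (n c : ℕ) (hn : 0 < n) (hc : 0 < c)
    (L lam α β : ℝ) (hL : 0 < L) (hlam : 0 < lam) (hα : 0 < α) (hβ : 0 < β)
    (hαL : L ≤ α)
    (Lt : EuclideanSpace ℝ (Fin n ⊕ Fin c) → ℝ)
    (hdiff : Differentiable ℝ Lt)
    (hnonneg : ∀ x, 0 ≤ Lt x)
    (hLip : ∀ x y, ‖gradient Lt x - gradient Lt y‖ ≤ L * ‖x - y‖)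
    (W : ℕ → EuclideanSpace ℝ (Fin n)) (γ ξ : ℕ → EuclideanSpace ℝ (Fin c))
    (hW : ∀ t, W (t + 1) = W t - (1 / α) • gradW Lt (W t) (γ t))
    (hγ : ∀ t, γ (t + 1) =
      (1 / (α + β)) • (α • γ t + β • ξ t) - (1 / (α + β)) • gradG Lt (W t) (γ t))
    (hξ : ∀ t, ξ (t + 1) =
      softThresh ((1 / (α + β)) • (α • ξ t + β • γ (t + 1))) (lam / (α + β))) :
    (∀ t : ℕ, objF Lt lam β (W (t + 1)) (γ (t + 1)) (ξ (t + 1)) ≤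
      objF Lt lam β (W t) (γ t) (ξ t)) ∧
    ∃ l : ℝ, Filter.Tendsto (fun t : ℕ => objF Lt lam β (W t) (γ t) (ξ t))
      Filter.atTop (nhds l) := by
  have hmono : ∀ t : ℕ, objF Lt lam β (W (t + 1)) (γ (t + 1)) (ξ (t + 1)) ≤
      objF Lt lam β (W t) (γ t) (ξ t) := by
    intro t
    have hk : 0 < α + β := by linarith
    have hdesc := descent_aux Lt L hdiff hLip (pairWγ (W t) (γ t))
      (pairWγ (W (t + 1)) (γ (t + 1)) - pairWγ (W t) (γ t))
    rw [add_sub_cancel] at hdesc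
    have hdesc2 : Lt (pairWγ (W (t + 1)) (γ (t + 1))) ≤ Lt (pairWγ (W t) (γ t)) +
        ((∑ i, (gradW Lt (W t) (γ t) i * (W (t + 1) i - W t i)
            + L / 2 * (W (t + 1) i - W t i) ^ 2)) +
        ∑ j, (gradG Lt (W t) (γ t) j * (γ (t + 1) j - γ t j)
            + L / 2 * (γ (t + 1) j - γ t j) ^ 2)) := by
      refine hdesc.trans (le_of_eq ?_)
      rw [EuclideanSpace.real_norm_sq_eq, PiLp.inner_apply]
      simp only [Fintype.sum_sum_type, Finset.sum_add_distrib, ← Finset.mul_sum]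
      simp [pairWγ, gradW, gradG, mul_comm]
      ring
    have hWs : (∑ i, (gradW Lt (W t) (γ t) i * (W (t + 1) i - W t i)
            + L / 2 * (W (t + 1) i - W t i) ^ 2)) ≤ 0 := by
      apply Finset.sum_nonpos
      intro i _
      have h : W (t + 1) i = W t i - 1 / α * gradW Lt (W t) (γ t) i := by
        rw [hW t]; simp
      have h' : gradW Lt (W t) (γ t) i = - α * (W (t + 1) i - W t i) := by
        rw [h]; field_simp; ring
      rw [h']
      nlinarith [sq_nonneg (W (t + 1) i - W t i)]
    have hγs : (∑ j, (gradG Lt (W t) (γ t) j * (γ (t + 1) j - γ t j)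
            + L / 2 * (γ (t + 1) j - γ t j) ^ 2)) + lam * (∑ i, |ξ (t + 1) i|)
            + β / 2 * ‖γ (t + 1) - ξ (t + 1)‖ ^ 2
            ≤ lam * (∑ i, |ξ t i|) + β / 2 * ‖γ t - ξ t‖ ^ 2 := by
      rw [EuclideanSpace.real_norm_sq_eq, EuclideanSpace.real_norm_sq_eq]
      simp only [Finset.mul_sum, ← Finset.sum_add_distrib]
      apply Finset.sum_le_sum
      intro j _
      simp only [PiLp.sub_apply]
      have h : γ (t + 1) j = 1 / (α + β) * (α * γ t j + β * ξ t j)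
          - 1 / (α + β) * gradG Lt (W t) (γ t) j := by
        rw [hγ t]; simp [mul_add]
      have h' : gradG Lt (W t) (γ t) j = α * γ t j + β * ξ t j - (α + β) * γ (t + 1) j := by
        rw [h]; field_simp; ring
      obtain ⟨x, hx⟩ : ∃ x, x = 1 / (α + β) * (α * ξ t j + β * γ (t + 1) j) := ⟨_, rfl⟩
      have hx' : (α + β) * x = α * ξ t j + β * γ (t + 1) j := by rw [hx]; field_simp
      have hu : ξ (t + 1) j = Real.sign x * max 0 (|x| - lam / (α + β)) := by
        rw [hξ t, hx]; rfl
      have hp := prox_aux lam (α + β) x (ξ t j) hlam hk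
      rw [← hu] at hp
      rw [h']
      clear h h' hu hx
      generalize ξ (t + 1) j = u at *
      generalize ξ t j = v at *
      generalize γ (t + 1) j = g' at *
      generalize γ t j = g at *
      have hp2 : lam * |u| + β / 2 * (g' - u) ^ 2 + α / 2 * (u - v) ^ 2
          ≤ lam * |v| + β / 2 * (g' - v) ^ 2 := by
        have e : (α + β) / 2 * (u - x) ^ 2 - (α + β) / 2 * (v - x) ^ 2
          = (β / 2 * (g' - u) ^ 2 + α / 2 * (u - v) ^ 2) - β / 2 * (g' - v) ^ 2 := by
          linear_combination (v - u) * hx'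
        linarith
      nlinarith [mul_nonneg hα.le (sq_nonneg (u - v)), mul_nonneg hk.le (sq_nonneg (g' - g)),
        mul_nonneg (sub_nonneg.2 hαL) (sq_nonneg (g' - g))]
    unfold objF
    linarith
  refine ⟨hmono, _, tendsto_atTop_ciInf (antitone_nat_of_succ_le hmono) ⟨0, ?_⟩⟩
  rintro _ ⟨t, rfl⟩
  have h1 := hnonneg (pairWγ (W t) (γ t))
  have h2 : 0 ≤ ∑ i, |ξ t i| := Finset.sum_nonneg fun i _ => abs_nonneg _
  simp only [objF]
  positivity
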